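/- arXiv:2111.09409 — 2 statements merged into one kernel-verified Lean document; each statement's English description precedes it below -/
import Mathlib

section
/- Let n ≥ 1 and let X, Y, Z be random variables taking values in (0,∞)^n on a common probability space, with Y independent of X and Y independent of Z. Let log Y denote the componentwise logarithm of Y, and let Φ_{log Y}(λ) := E[exp(i⟨λ, log Y⟩)] for λ ∈ ℝ^n be the characteristic function of log Y. If the set {λ ∈ ℝ^n : Φ_{log Y}(λ) ≠ 0} is dense in ℝ^n, then Y is multivariate simplifiable: the equality in distribution X × Y =ᵈ Z × Y of the componentwise (entrywise) products implies X =ᵈ Z. -/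
open MeasureTheory ProbabilityTheory Real

/-!
Taking componentwise logarithms turns entrywise products into sums. By independence, the law of
`log X + log Y` has characteristic function `Φ_{log X} Φ_{log Y}`, and likewise for `Z`, so the
hypothesis gives `Φ_{log X} Φ_{log Y} = Φ_{log Z} Φ_{log Y}`. Hence `Φ_{log X}` and `Φ_{log Z}`
agree on the dense set where `Φ_{log Y}` does not vanish. Characteristic functions are continuous
and determine the law, so `log X` and `log Z` have the same law, and exponentiating
componentwise gives the claim.
-/

/-- The componentwise logarithm, with values in Euclidean space because `charFun` is defined on
inner product spaces. -/
noncomputable def logVec {n : ℕ} (x : Fin n → ℝ) : EuclideanSpace ℝ (Fin n) :=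
  WithLp.toLp 2 fun i => Real.log (x i)

/-- The componentwise exponential, a left inverse of `logVec` on vectors with positive entries. -/
noncomputable def expVec {n : ℕ} (u : EuclideanSpace ℝ (Fin n)) : Fin n → ℝ :=
  fun i => Real.exp (u i)

lemma measurable_logVec {n : ℕ} : Measurable (logVec (n := n)) :=
  (WithLp.measurable_toLp 2 _).comp
    (measurable_pi_lambda _ fun i => (measurable_pi_apply i).log)

lemma measurable_logVec_fun {Ω : Type*} [MeasurableSpace Ω] {n : ℕ} {X : Ω → (Fin n → ℝ)}
    (hX : Measurable X) : Measurable fun ω => logVec (X ω) :=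
  measurable_logVec.comp hX

lemma measurable_expVec {n : ℕ} : Measurable (expVec (n := n)) := by
  unfold expVec
  fun_prop

lemma expVec_logVec {n : ℕ} {x : Fin n → ℝ} (hx : ∀ i, 0 < x i) : expVec (logVec x) = x :=
  funext fun i => Real.exp_log (hx i)

lemma logVec_mul {n : ℕ} {x y : Fin n → ℝ} (hx : ∀ i, 0 < x i) (hy : ∀ i, 0 < y i) :
    logVec (fun i => x i * y i) = logVec x + logVec y := by
  ext i
  exact Real.log_mul (hx i).ne' (hy i).ne'

/-- `charFun` of the law of `log Y` is the characteristic function written in coordinates. -/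
lemma charFun_map_logVec {Ω : Type*} [MeasurableSpace Ω] (P : Measure Ω) {n : ℕ}
    {Y : Ω → (Fin n → ℝ)} (hY : Measurable Y) (l : Fin n → ℝ) :
    charFun (P.map fun ω => logVec (Y ω)) (WithLp.toLp 2 l) =
      ∫ ω, Complex.exp (Complex.I * ((∑ i, l i * Real.log (Y ω i) : ℝ) : ℂ)) ∂P := by
  rw [charFun_apply, integral_map (measurable_logVec_fun hY).aemeasurable
    (Measurable.aestronglyMeasurable (by fun_prop))]
  congr 1 with ω
  rw [mul_comm Complex.I]
  simp [logVec, PiLp.inner_apply]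

/-- A function into `(0,∞)ⁿ` has its law determined by the law of its logarithm. -/
lemma map_expVec_map_logVec {Ω : Type*} [MeasurableSpace Ω] (P : Measure Ω) {n : ℕ}
    {X : Ω → (Fin n → ℝ)} (hX : Measurable X) (hpos : ∀ ω i, 0 < X ω i) :
    (P.map fun ω => logVec (X ω)).map expVec = P.map X := by
  rw [Measure.map_map measurable_expVec (measurable_logVec_fun hX)]
  congr 1 with ω : 1
  exact expVec_logVec (hpos ω)

/-- Independence and positivity factor the characteristic function of `log (X × Y)`. -/
lemma charFun_logVec_mul {Ω : Type*} [MeasurableSpace Ω] (P : Measure Ω)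
    [IsProbabilityMeasure P] {n : ℕ} {X Y : Ω → (Fin n → ℝ)}
    (hX : Measurable X) (hY : Measurable Y)
    (hXpos : ∀ ω i, 0 < X ω i) (hYpos : ∀ ω i, 0 < Y ω i) (h : IndepFun Y X P) :
    charFun ((P.map fun ω i => X ω i * Y ω i).map logVec) =
      charFun (P.map fun ω => logVec (X ω)) * charFun (P.map fun ω => logVec (Y ω)) := by
  have hlog : IndepFun (fun ω => logVec (X ω)) (fun ω => logVec (Y ω)) P :=
    h.symm.comp measurable_logVec measurable_logVec
  rw [Measure.map_map measurable_logVec (by fun_prop),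
    ← hlog.charFun_map_fun_add_eq_mul (measurable_logVec_fun hX).aemeasurable
      (measurable_logVec_fun hY).aemeasurable]
  congr 2 with ω : 1
  exact logVec_mul (hXpos ω) (hYpos ω)

/-- Lemma 6.2 (multivariate simplifiable random variables): if the characteristic
function of `log Y` is nonzero on a dense set of `λ ∈ ℝⁿ`, then `Y` is multivariate
simplifiable: for `X, Z` independent of `Y`, equality in distribution of the entrywise
products `X × Y =ᵈ Z × Y` implies `X =ᵈ Z`. -/
theorem multivariate_simplifiable
    {Ω : Type*} [MeasurableSpace Ω] (P : Measure Ω) [IsProbabilityMeasure P]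
    (n : ℕ) (hn : 1 ≤ n)
    (X Y Z : Ω → (Fin n → ℝ))
    (hXm : Measurable X) (hYm : Measurable Y) (hZm : Measurable Z)
    (hXpos : ∀ ω i, 0 < X ω i) (hYpos : ∀ ω i, 0 < Y ω i) (hZpos : ∀ ω i, 0 < Z ω i)
    (hindXY : IndepFun Y X P) (hindYZ : IndepFun Y Z P)
    (hdense : Dense {l : Fin n → ℝ |
      (∫ ω, Complex.exp (Complex.I * ((∑ i, l i * Real.log (Y ω i) : ℝ) : ℂ)) ∂P) ≠ 0})
    (hEq : Measure.map (fun ω i => X ω i * Y ω i) P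
         = Measure.map (fun ω i => Z ω i * Y ω i) P) :
    Measure.map X P = Measure.map Z P := by
  have hLX : Measurable fun ω => logVec (X ω) := measurable_logVec_fun hXm
  have hLZ : Measurable fun ω => logVec (Z ω) := measurable_logVec_fun hZm
  have := Measure.isProbabilityMeasure_map (μ := P) hLX.aemeasurable
  have := Measure.isProbabilityMeasure_map (μ := P) hLZ.aemeasurable
  have hprod := charFun_logVec_mul P hXm hYm hXpos hYpos hindXY
  rw [hEq, charFun_logVec_mul P hZm hYm hZpos hYpos hindYZ] at hprod
  have hcont (μ : Measure (EuclideanSpace ℝ (Fin n))) [IsProbabilityMeasure μ] :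
      Continuous fun l : Fin n → ℝ => charFun μ (WithLp.toLp 2 l) :=
    continuous_charFun.comp (PiLp.continuous_toLp 2 _)
  have hfun := (hcont (P.map fun ω => logVec (X ω))).ext_on hdense
    (hcont (P.map fun ω => logVec (Z ω))) fun l hl => by
      rw [Set.mem_ofPred_eq, ← charFun_map_logVec P hYm] at hl
      exact mul_right_cancel₀ hl (congrFun hprod (WithLp.toLp 2 l)).symm
  have hlaw : (P.map fun ω => logVec (X ω)) = P.map fun ω => logVec (Z ω) :=
    Measure.ext_of_charFun (funext fun t => congrFun hfun (WithLp.ofLp t))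
  rw [← map_expVec_map_logVec P hXm hXpos, hlaw, map_expVec_map_logVec P hZm hZpos]
end

section
/- Fix θ > 0 and a > 0, let J be a strictly positive real random variable, and let B be a Borel subset of (0,∞). Then ∫_0^a θ s^{-1} P(sJ ∈ B) ds = ∫_B θ P(J > x/a) x^{-1} dx. -/
/-!
Both sides are iterated integrals over `s` (or `x`) and `ω`, once the probabilities are written as
integrals of indicators. By Tonelli the `ω`-integral can be taken last, so it suffices to treat a
fixed value `c = J ω > 0`. There the substitution `x = s c` leaves the measure `ds / s` invariant
and sends `{s < a, s c ∈ B}` to `{x ∈ B, x / a < c}`: this is `lintegral_scale_invariant`.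
-/

open MeasureTheory ProbabilityTheory Real

/-- The identity for a deterministic jump `c`: invariance of `ds / s` under `s ↦ s c`. -/
lemma lintegral_scale_invariant (θ a c : ℝ) (ha : 0 < a) (hc : 0 < c)
    (B : Set ℝ) (hB : MeasurableSet B) (hBsub : B ⊆ Set.Ioi 0) :
    ∫⁻ s in Set.Ioo (0 : ℝ) a, ENNReal.ofReal (θ / s) * B.indicator 1 (s * c)
      = ∫⁻ x in B, ENNReal.ofReal (θ / x) * {p : ℝ | p / a < c}.indicator 1 x := by
  rw [← lintegral_indicator measurableSet_Ioo, ← lintegral_indicator hB]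
  have hS : MeasurableSet {p : ℝ | p / a < c} :=
    measurableSet_lt (by fun_prop) measurable_const
  have hm : Measurable (B.indicator fun x : ℝ =>
      ENNReal.ofReal (θ / x) * {p : ℝ | p / a < c}.indicator (1 : ℝ → ENNReal) x) :=
    (Measurable.mul (by fun_prop) (measurable_one.indicator hS)).indicator hB
  conv_rhs => rw [← Real.smul_map_volume_mul_right hc.ne']
  rw [lintegral_smul_measure, lintegral_map hm (by fun_prop), smul_eq_mul,
    ← lintegral_const_mul' _ _ ENNReal.ofReal_ne_top]
  refine lintegral_congr fun s => ?_
  by_cases hs : s * c ∈ B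
  · have hs0 : 0 < s := pos_of_mul_pos_left (hBsub hs) hc.le
    by_cases hsa : s < a
    · have h1 : s * c / a < c := by
        rw [div_lt_iff₀ ha]; nlinarith
      have h2 : c * (θ / (s * c)) = θ / s := by field_simp
      simp [hs, hs0, hsa, h1, abs_of_pos hc, ← ENNReal.ofReal_mul hc.le, h2]
    · have h1 : ¬ s * c / a < c := by
        rw [div_lt_iff₀ ha]; nlinarith
      simp [hs, hsa, h1]
  · simp [hs, Set.indicator_apply]

/-- Equations (4.8)–(4.11): for a strictly positive random variable `J`, `θ > 0`,
`a > 0` and a Borel set `B ⊆ (0,∞)`,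
`∫_0^a θ s⁻¹ P(sJ ∈ B) ds = ∫_B θ P(J > x/a) x⁻¹ dx`. -/
theorem scale_mixture_identity
    {Ω : Type*} [MeasurableSpace Ω] (P : Measure Ω) [IsProbabilityMeasure P]
    (θ a : ℝ) (hθ : 0 < θ) (ha : 0 < a)
    (J : Ω → ℝ) (hJm : Measurable J) (hJpos : ∀ ω, 0 < J ω)
    (B : Set ℝ) (hB : MeasurableSet B) (hBsub : B ⊆ Set.Ioi 0) :
    ∫⁻ s in Set.Ioo (0 : ℝ) a, ENNReal.ofReal (θ / s) * P {ω | s * J ω ∈ B}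
      = ∫⁻ x in B, ENNReal.ofReal (θ / x) * P {ω | x / a < J ω} := by
  -- Both sides have the form `∫ ofReal (θ / s) * P {ω | (s, ω) ∈ S} dμ(s)`, to which Tonelli applies.
  have tonelli : ∀ (μ : Measure ℝ) [SFinite μ] (S : Set (ℝ × Ω)), MeasurableSet S →
      ∫⁻ s, ENNReal.ofReal (θ / s) * P {ω | (s, ω) ∈ S} ∂μ
        = ∫⁻ ω, ∫⁻ s, ENNReal.ofReal (θ / s) * S.indicator 1 (s, ω) ∂μ ∂P := by
    intro μ _ S hS
    have hi : Measurable (S.indicator (1 : ℝ × Ω → ENNReal)) := measurable_one.indicator hS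
    rw [← lintegral_lintegral_swap]
    · refine lintegral_congr fun s => ?_
      rw [lintegral_const_mul' _ _ ENNReal.ofReal_ne_top]
      congr 1
      exact (lintegral_indicator_one (measurable_prodMk_left hS)).symm
    · exact (Measurable.mul (by fun_prop) hi).aemeasurable
  have h1 : MeasurableSet {p : ℝ × Ω | p.1 * J p.2 ∈ B} :=
    (show Measurable fun p : ℝ × Ω => p.1 * J p.2 by fun_prop) hB
  have h2 : MeasurableSet {p : ℝ × Ω | p.1 / a < J p.2} :=
    measurableSet_lt (by fun_prop) (by fun_prop)
  exact (tonelli _ _ h1).trans ((lintegral_congr fun ω =>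
    lintegral_scale_invariant θ a (J ω) ha (hJpos ω) B hB hBsub).trans (tonelli _ _ h2).symm)
end
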